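/- arXiv:2305.13293 — 8 statements merged into one kernel-verified Lean document; each statement's English description precedes it below -/
import Mathlib

section
/- Let 0 < L < U be reals and Φ(z) = (L/e)·((U·e)/L)^z. For every z_T ∈ [1/(ln(U/L)+1), 1], the integral ∫₀^{z_T} max(L, Φ(z)) dz equals Φ(z_T)/(ln(U/L)+1); in particular Φ(z_T) = (ln(U/L)+1) · ∫₀^{z_T} max(L, Φ(z)) dz. (This is the integral identity underlying the (ln(U/L)+1)-competitiveness of the ZCL algorithm.) -/
/-!
With `c = log (U / L) + 1` the threshold is `Φ z = L * exp (c * z - 1)`, which increases, takes the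
value `L` at `1 / c`, and satisfies `Φ' = c * Φ`. Hence the flat part of `max L Φ` contributes
`L / c` and the remaining part `(Φ zT - L) / c`: the boundary term at `1 / c` cancels exactly.
-/

open Real Set intervalIntegral

theorem integral_max_eq_of_monotoneOn {f : ℝ → ℝ} {a w b : ℝ} (hf : MonotoneOn f (Icc a b))
    (haw : a ≤ w) (hwb : w ≤ b) :
    ∫ z in a..b, max (f w) (f z) = (w - a) * f w + ∫ z in w..b, f z := by
  have hw : w ∈ Icc a b := ⟨haw, hwb⟩
  have left_eqOn : EqOn (fun z ↦ max (f w) (f z)) (fun _ ↦ f w) (uIcc a w) := by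
    rw [uIcc_of_le haw]
    exact fun z hz ↦ max_eq_left (hf ⟨hz.1, hz.2.trans hwb⟩ hw hz.2)
  have right_eqOn : EqOn (fun z ↦ max (f w) (f z)) f (uIcc w b) := by
    rw [uIcc_of_le hwb]
    exact fun z hz ↦ max_eq_right (hf hw ⟨haw.trans hz.1, hz.2⟩ hz.1)
  have max_monotoneOn : MonotoneOn (fun z ↦ max (f w) (f z)) (Icc a b) :=
    fun _ hx _ hy hxy ↦ max_le_max_left _ (hf hx hy hxy)
  have left_integrable : IntervalIntegrable (fun z ↦ max (f w) (f z)) MeasureTheory.volume a w :=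
    (max_monotoneOn.mono (uIcc_of_le haw ▸ Icc_subset_Icc_right hwb)).intervalIntegrable
  have right_integrable : IntervalIntegrable (fun z ↦ max (f w) (f z)) MeasureTheory.volume w b :=
    (max_monotoneOn.mono (uIcc_of_le hwb ▸ Icc_subset_Icc_left haw)).intervalIntegrable
  rw [← integral_add_adjacent_intervals left_integrable right_integrable,
    integral_congr left_eqOn, integral_congr right_eqOn, integral_const, smul_eq_mul]

theorem integral_exp_mul_sub {c : ℝ} (hc : c ≠ 0) (a b d : ℝ) :
    ∫ z in a..b, exp (c * z - d) = (exp (c * b - d) - exp (c * a - d)) / c := by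
  rw [integral_comp_mul_sub exp hc, integral_exp, smul_eq_mul, inv_mul_eq_div]

theorem integral_max_mul_exp {L c t : ℝ} (hL : 0 ≤ L) (hc : 0 < c) (ht : 1 / c ≤ t) :
    ∫ z in 0..t, max L (L * exp (c * z - 1)) = L * exp (c * t - 1) / c := by
  have exp_mono : Monotone fun z ↦ L * exp (c * z - 1) := fun x y hxy ↦ by
    dsimp only
    gcongr
  have exp_crossing : L * exp (c * (1 / c) - 1) = L := by
    rw [mul_one_div_cancel hc.ne', sub_self, exp_zero, mul_one]
  calc ∫ z in 0..t, max L (L * exp (c * z - 1))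
      = (1 / c - 0) * L + ∫ z in (1 / c)..t, L * exp (c * z - 1) := by
        simpa only [exp_crossing] using
          integral_max_eq_of_monotoneOn (exp_mono.monotoneOn _) (one_div_pos.2 hc).le ht
    _ = (1 / c - 0) * L + (L * exp (c * t - 1) - L) / c := by
        rw [integral_const_mul, integral_exp_mul_sub hc.ne', mul_div_assoc', mul_sub, exp_crossing]
    _ = L * exp (c * t - 1) / c := by ring

/-- The threshold `Φ` of the ZCL algorithm: the least value density admitted at utilization `z`,
when value densities range over `[L, U]`. It is defined for all real `z`, not only on `[0, 1]`. -/
noncomputable def zclThreshold (L U z : ℝ) : ℝ :=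
  (L / exp 1) * ((U * exp 1) / L) ^ z

section

variable {L U : ℝ}

theorem log_mul_exp_one_div (hL : L ≠ 0) (hU : U ≠ 0) :
    log (U * exp 1 / L) = log (U / L) + 1 := by
  rw [mul_div_right_comm, log_mul (div_ne_zero hU hL) (exp_ne_zero 1), log_exp]

theorem zclThreshold_eq_mul_exp (hL : 0 < L) (hU : 0 < U) (z : ℝ) :
    zclThreshold L U z = L * exp ((log (U / L) + 1) * z - 1) := by
  rw [zclThreshold, rpow_def_of_pos (by positivity), log_mul_exp_one_div hL.ne' hU.ne', exp_sub]
  ring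

theorem zcl_integral_identity_general (hL : 0 < L) (hLU : L < U * exp 1) {zT : ℝ}
    (hzT : 1 / (log (U / L) + 1) ≤ zT) :
    (∫ z in 0..zT, max L (zclThreshold L U z)) = zclThreshold L U zT / (log (U / L) + 1) ∧
      zclThreshold L U zT = (log (U / L) + 1) * ∫ z in 0..zT, max L (zclThreshold L U z) := by
  have hU : 0 < U := pos_of_mul_pos_left (hL.trans hLU) (exp_pos 1).le
  have rate_pos : 0 < log (U / L) + 1 := by
    rw [← log_mul_exp_one_div hL.ne' hU.ne']
    exact log_pos ((one_lt_div hL).2 hLU)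
  have integral_eq :
      ∫ z in 0..zT, max L (zclThreshold L U z) = zclThreshold L U zT / (log (U / L) + 1) := by
    simp only [zclThreshold_eq_mul_exp hL hU]
    exact integral_max_mul_exp hL.le rate_pos hzT
  exact ⟨integral_eq, by rw [integral_eq, mul_div_cancel₀ _ rate_pos.ne']⟩

end

/-- Integral identity underlying the `(ln(U/L)+1)`-competitiveness of the ZCL
algorithm: for any final utilization `z_T ≥ 1/(ln(U/L)+1)`, the integral of the
clamped threshold `max(L, Φ(z))` over `[0, z_T]` equals `Φ(z_T)/(ln(U/L)+1)`. -/
theorem zcl_integral_identity (L U : ℝ) (hL : 0 < L) (hLU : L < U) :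
    ∀ zT ∈ Set.Icc (1 / (Real.log (U / L) + 1)) (1 : ℝ),
      (∫ z in (0 : ℝ)..zT,
          max L ((L / Real.exp 1) * ((U * Real.exp 1) / L) ^ z)) =
        (L / Real.exp 1) * ((U * Real.exp 1) / L) ^ zT / (Real.log (U / L) + 1) ∧
      (L / Real.exp 1) * ((U * Real.exp 1) / L) ^ zT =
        (Real.log (U / L) + 1) *
          ∫ z in (0 : ℝ)..zT,
            max L ((L / Real.exp 1) * ((U * Real.exp 1) / L) ^ z) := by
  have hLUe : L < U * exp 1 :=
    hLU.trans (lt_mul_of_one_lt_right (hL.trans hLU) (one_lt_exp_iff.2 one_pos))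
  exact fun _ hzT ↦ zcl_integral_identity_general hL hLUe hzT.1
end

section
/- Let 0 < L < U be reals, α ∈ [1/(ln(U/L)+1), 1), ℓ = α + (α−1)/ln(U/L), and Φ^α(z) = (L/e)·((U·e)/L)^{(z−ℓ)/(1−ℓ)}. Then for every z_T ∈ [α, 1], the denominator L·(α − (1−ℓ)/(ln(U/L)+1)) + (1−ℓ)·Φ^α(z_T)/(ln(U/L)+1) is positive and Φ^α(z_T) / [ L·(α − (1−ℓ)/(ln(U/L)+1)) + (1−ℓ)·Φ^α(z_T)/(ln(U/L)+1) ] ≤ U·(ln(U/L)+1) / [ L·α·(ln(U/L)+1) + (U−L)·(1−ℓ) ]. (This is the analytic core of the theorem that the baseline algorithm is U(ln(U/L)+1)/(Lα(ln(U/L)+1)+(U−L)(1−ℓ))-competitive.) -/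
/-!
Write `k = ln (U / L)` and `m = (1 - α) / k`, so that `1 - ℓ = m (k + 1)`. The collected value at
`z_T` is then the affine function `L (α - m) + m p` of the marginal density `p = Φ (z_T)`, and the
claimed competitive ratio is `p / (L (α - m) + m p)` at `p = U`. The lower bound on `α` says exactly
that `m ≤ α`, so this ratio is nondecreasing in `p > 0`, while `Φ` increases to `Φ 1 = U`.
-/

/-- The exponential admission threshold `Φ` with density bounds `L`, `U` and offset `ℓ`, as a
function of the utilization `z`. -/
noncomputable def expThreshold (L U ℓ z : ℝ) : ℝ :=
  L / Real.exp 1 * (U * Real.exp 1 / L) ^ ((z - ℓ) / (1 - ℓ))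

/-- The value collected up to the utilization at which the threshold equals `p`: `L * α` from the
part clamped at `L`, and `m * (p - L)` from the exponential part, for which `m * expThreshold` with
`m = (1 - ℓ) / (ln (U / L) + 1)` is an antiderivative. -/
def collectedValue {K : Type*} [Ring K] (L α m p : K) : K :=
  L * (α - m) + m * p

section Threshold

variable {L U ℓ : ℝ}

lemma expThreshold_pos (hL : 0 < L) (hU : 0 < U) (z : ℝ) : 0 < expThreshold L U ℓ z := by
  unfold expThreshold
  positivity

lemma expThreshold_one (hL : L ≠ 0) (hℓ : ℓ ≠ 1) : expThreshold L U ℓ 1 = U := by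
  rw [expThreshold, div_self (sub_ne_zero.2 hℓ.symm), Real.rpow_one]
  field_simp

lemma expThreshold_monotone (hL : 0 < L) (hLU : L ≤ U * Real.exp 1) (hℓ : ℓ ≤ 1) :
    Monotone (expThreshold L U ℓ) := by
  intro y z hyz
  have one_le_base : 1 ≤ U * Real.exp 1 / L := (one_le_div hL).2 hLU
  have : 0 ≤ 1 - ℓ := sub_nonneg.2 hℓ
  unfold expThreshold
  gcongr

end Threshold

section Offset

variable {K : Type*} [Field K] {k : K}

lemma one_sub_offset (hk : k ≠ 0) (α : K) :
    1 - (α + (α - 1) / k) = (1 - α) / k * (k + 1) := by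
  field_simp
  ring

lemma one_sub_div_le_iff [LinearOrder K] [IsStrictOrderedRing K] {α : K} (hk : 0 < k) :
    (1 - α) / k ≤ α ↔ 1 / (k + 1) ≤ α := by
  rw [div_le_iff₀ hk, div_le_iff₀ (by positivity), sub_le_iff_le_add, mul_add_one]

end Offset

section CollectedValue

variable {K : Type*} [Field K]

lemma mul_sub_div_add_mul_div_eq_collectedValue {c : K} (hc : c ≠ 0) (L α m p : K) :
    L * (α - m * c / c) + m * c * p / c = collectedValue L α m p := by
  rw [mul_div_cancel_right₀ _ hc, mul_right_comm, mul_div_cancel_right₀ _ hc, collectedValue]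

lemma mul_div_eq_div_collectedValue {c : K} (hc : c ≠ 0) (L U α m : K) :
    U * c / (L * α * c + (U - L) * (m * c)) = U / collectedValue L α m U := by
  rw [← mul_div_mul_right U (collectedValue L α m U) hc, collectedValue]
  ring_nf

variable [LinearOrder K] [IsStrictOrderedRing K] {L α m : K}

lemma collectedValue_pos (hL : 0 ≤ L) (hm : 0 < m) (hmα : m ≤ α) {p : K} (hp : 0 < p) :
    0 < collectedValue L α m p :=
  add_pos_of_nonneg_of_pos (mul_nonneg hL (sub_nonneg.2 hmα)) (mul_pos hm hp)

lemma monotoneOn_div_collectedValue (hL : 0 ≤ L) (hm : 0 < m) (hmα : m ≤ α) :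
    MonotoneOn (fun p => p / collectedValue L α m p) (Set.Ioi 0) := by
  intro p hp q hq hpq
  have cross_mul_le : p * (L * (α - m)) ≤ q * (L * (α - m)) :=
    mul_le_mul_of_nonneg_right hpq (mul_nonneg hL (sub_nonneg.2 hmα))
  refine (div_le_div_iff₀ (collectedValue_pos hL hm hmα hp) (collectedValue_pos hL hm hmα hq)).2 ?_
  simp only [collectedValue]
  linear_combination cross_mul_le

end CollectedValue

theorem baseline_competitive_ratio_general (L U α : ℝ) (hL : 0 < L) (hLU : L < U)
    (hα : α ∈ Set.Ico (1 / (Real.log (U / L) + 1)) (1 : ℝ))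
    (ℓ : ℝ) (hℓ : ℓ = α + (α - 1) / Real.log (U / L))
    (Φ : ℝ → ℝ)
    (hΦ : ∀ z, Φ z = (L / Real.exp 1) * ((U * Real.exp 1) / L) ^ ((z - ℓ) / (1 - ℓ))) :
    ∀ zT ≤ 1,
      0 < L * (α - (1 - ℓ) / (Real.log (U / L) + 1)) +
          (1 - ℓ) * Φ zT / (Real.log (U / L) + 1) ∧
      Φ zT /
          (L * (α - (1 - ℓ) / (Real.log (U / L) + 1)) +
            (1 - ℓ) * Φ zT / (Real.log (U / L) + 1)) ≤
        U * (Real.log (U / L) + 1) /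
          (L * α * (Real.log (U / L) + 1) + (U - L) * (1 - ℓ)) := by
  intro zT hzT
  have hU : 0 < U := hL.trans hLU
  have hk : 0 < Real.log (U / L) := Real.log_pos ((one_lt_div hL).2 hLU)
  have hk1 : 0 < Real.log (U / L) + 1 := by positivity
  obtain rfl : Φ = expThreshold L U ℓ := funext hΦ
  have offset_eq : 1 - ℓ = (1 - α) / Real.log (U / L) * (Real.log (U / L) + 1) :=
    hℓ ▸ one_sub_offset hk.ne' α
  have hmα : (1 - α) / Real.log (U / L) ≤ α := (one_sub_div_le_iff hk).2 hα.1
  have hm : 0 < (1 - α) / Real.log (U / L) := div_pos (sub_pos.2 hα.2) hk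
  have hℓ1 : ℓ < 1 := sub_pos.1 (offset_eq ▸ mul_pos hm hk1)
  have threshold_pos : 0 < expThreshold L U ℓ zT := expThreshold_pos hL hU zT
  have threshold_le : expThreshold L U ℓ zT ≤ U :=
    have hLUe : L ≤ U * Real.exp 1 :=
      hLU.le.trans (le_mul_of_one_le_right hU.le (Real.one_le_exp zero_le_one))
    (expThreshold_monotone hL hLUe hℓ1.le hzT).trans_eq (expThreshold_one hL.ne' hℓ1.ne)
  rw [offset_eq, mul_sub_div_add_mul_div_eq_collectedValue hk1.ne',
    mul_div_eq_div_collectedValue hk1.ne']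
  exact ⟨collectedValue_pos hL.le hm hmα threshold_pos,
    monotoneOn_div_collectedValue hL.le hm hmα threshold_pos hU threshold_le⟩

/-- Analytic core of the competitiveness bound for the baseline algorithm: for
every final utilization `z_T ∈ [α, 1]`, the collected value
`L·(α − (1−ℓ)/(ln(U/L)+1)) + (1−ℓ)·Φ^α(z_T)/(ln(U/L)+1)` is positive and the
ratio of `Φ^α(z_T)` to it is at most
`U·(ln(U/L)+1) / (L·α·(ln(U/L)+1) + (U−L)·(1−ℓ))`. -/
theorem baseline_competitive_ratio (L U α : ℝ) (hL : 0 < L) (hLU : L < U)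
    (hα : α ∈ Set.Ico (1 / (Real.log (U / L) + 1)) (1 : ℝ))
    (ℓ : ℝ) (hℓ : ℓ = α + (α - 1) / Real.log (U / L))
    (Φ : ℝ → ℝ)
    (hΦ : ∀ z, Φ z = (L / Real.exp 1) * ((U * Real.exp 1) / L) ^ ((z - ℓ) / (1 - ℓ))) :
    ∀ zT ∈ Set.Icc α (1 : ℝ),
      0 < L * (α - (1 - ℓ) / (Real.log (U / L) + 1)) +
          (1 - ℓ) * Φ zT / (Real.log (U / L) + 1) ∧
      Φ zT /
          (L * (α - (1 - ℓ) / (Real.log (U / L) + 1)) +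
            (1 - ℓ) * Φ zT / (Real.log (U / L) + 1)) ≤
        U * (Real.log (U / L) + 1) /
          (L * α * (Real.log (U / L) + 1) + (U - L) * (1 - ℓ)) :=
  fun zT hzT => baseline_competitive_ratio_general L U α hL hLU hα ℓ hℓ Φ hΦ zT hzT.2
end

section
/- Let L > 0, U > 0 be reals and α ∈ (0,1). Then there exists a unique β > 0 satisfying L·α·β = U·exp(β·(α−1)). (This unique fixed point is the Pareto-optimal competitive ratio β = W(U(1−α)/(Lα))/(1−α), where W is the Lambert W function, used to define the ECT algorithm's threshold.) -/
open Set

theorem eq_of_strictMonoOn_of_antitoneOn {ι γ : Type*} [LinearOrder ι] [Preorder γ]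
    {f g : ι → γ} {s : Set ι} {x y : ι} (hf : StrictMonoOn f s) (hg : AntitoneOn g s)
    (hx : x ∈ s) (hy : y ∈ s) (hfgx : f x = g x) (hfgy : f y = g y) : x = y := by
  have not_lt_of_crossings {u v : ι} (hu : u ∈ s) (hv : v ∈ s) (hfgu : f u = g u)
      (hfgv : f v = g v) : ¬u < v := fun huv ↦
    lt_irrefl (f u) <| calc
      f u < f v := hf hu hv huv
      _ = g v := hfgv
      _ ≤ g u := hg hu hv huv.le
      _ = f u := hfgu.symm
  exact le_antisymm (not_lt.1 (not_lt_of_crossings hy hx hfgy hfgx))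
    (not_lt.1 (not_lt_of_crossings hx hy hfgx hfgy))

section AntitoneOn

variable {a : ℝ} {g : ℝ → ℝ}

theorem exists_pos_mul_eq_of_antitoneOn (ha : 0 < a) (hcont : ContinuousOn g (Ici 0))
    (hanti : AntitoneOn g (Ici 0)) (hg : 0 < g 0) : ∃ x, 0 < x ∧ a * x = g x := by
  have hbound : 0 ≤ g 0 / a := (div_pos hg ha).le
  have below_at_zero : a * 0 ≤ g 0 := by simpa using hg.le
  have above_at_bound : g (g 0 / a) ≤ a * (g 0 / a) := by
    rw [mul_div_cancel₀ _ ha.ne']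
    exact hanti self_mem_Ici hbound hbound
  obtain ⟨x, hx, hxg⟩ := isPreconnected_Icc.intermediate_value₂ (left_mem_Icc.2 hbound)
    (right_mem_Icc.2 hbound) (by fun_prop) (hcont.mono Icc_subset_Ici_self)
    below_at_zero above_at_bound
  have hx_ne : x ≠ 0 := by
    rintro rfl
    simp [hg.ne] at hxg
  exact ⟨x, hx.1.lt_of_ne' hx_ne, hxg⟩

theorem existsUnique_pos_mul_eq_of_antitoneOn (ha : 0 < a) (hcont : ContinuousOn g (Ici 0))
    (hanti : AntitoneOn g (Ici 0)) (hg : 0 < g 0) : ∃! x, 0 < x ∧ a * x = g x := by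
  obtain ⟨x, hx, hxg⟩ := exists_pos_mul_eq_of_antitoneOn ha hcont hanti hg
  refine ⟨x, ⟨hx, hxg⟩, fun y ⟨hy, hyg⟩ ↦ ?_⟩
  have hlin : StrictMonoOn (a * ·) (Ici 0) := (strictMono_mul_left_of_pos ha).strictMonoOn _
  exact eq_of_strictMonoOn_of_antitoneOn hlin hanti hy.le hx.le hyg hxg

end AntitoneOn

theorem antitone_mul_exp_mul {b c : ℝ} (hb : 0 ≤ b) (hc : c ≤ 0) :
    Antitone fun x : ℝ ↦ b * Real.exp (x * c) := fun _ _ hxy ↦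
  mul_le_mul_of_nonneg_left (Real.exp_le_exp.2 (mul_le_mul_of_nonpos_right hxy hc)) hb

theorem ect_beta_exists_unique_general {a b c : ℝ} (ha : 0 < a) (hb : 0 < b) (hc : c ≤ 0) :
    ∃! x : ℝ, 0 < x ∧ a * x = b * Real.exp (x * c) :=
  existsUnique_pos_mul_eq_of_antitoneOn ha (by fun_prop)
    ((antitone_mul_exp_mul hb.le hc).antitoneOn _) (by simpa using hb)

/-- There exists a unique `β > 0` with `L·α·β = U·exp(β·(α−1))`; this is the
Pareto-optimal competitive ratio `β = W(U(1−α)/(Lα))/(1−α)` used by the ECT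
algorithm. -/
theorem ect_beta_exists_unique (L U α : ℝ) (hL : 0 < L) (hU : 0 < U)
    (hα : α ∈ Set.Ioo (0 : ℝ) 1) :
    ∃! β : ℝ, 0 < β ∧ L * α * β = U * Real.exp (β * (α - 1)) :=
  ect_beta_exists_unique_general (mul_pos hL hα.1) hU (sub_nonpos.2 hα.2.le)
end

section
/- Let 0 < L < U be reals, let α ∈ [1/(ln(U/L)+1), 1), and let β > 0 satisfy L·α·β = U·exp(β·(α−1)). Then α·β ≥ 1, i.e. β ≥ 1/α. (This inequality shows that the ECT threshold jumps upward at utilization α — from L to U·e^{β(α−1)} = L·α·β ≥ L — and it yields the Case I competitive bound Ψ^α(α)/(Lα) = 1/α ≤ β in the proof that ECT is β-competitive.) -/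
/-!
With `x = α * β` and `c = α⁻¹ - 1`, the equation defining `β` says that `x` is a fixed point of the
antitone map `y ↦ U / L * exp (-(c * y))`. The lower bound on `α` says that `c ≤ log (U / L)`, so
this map sends `1` to a value at least `1`; a fixed point below `1` would then contradict
antitonicity.
-/

open Real Function

theorem le_of_isFixedPt_of_antitone {γ : Type*} [LinearOrder γ] {f : γ → γ} {a x : γ}
    (hf : Antitone f) (ha : a ≤ f a) (hx : IsFixedPt f x) : a ≤ x := by
  by_contra! hxa
  have hax : a ≤ x := calc
    a ≤ f a := ha
    _ ≤ f x := hf hxa.le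
    _ = x := hx
  exact hax.not_gt hxa

theorem antitone_mul_exp_neg_mul {r c : ℝ} (hr : 0 ≤ r) (hc : 0 ≤ c) :
    Antitone fun y : ℝ ↦ r * exp (-(c * y)) := by
  intro y z hyz
  dsimp only
  gcongr

theorem one_le_of_isFixedPt_mul_exp_neg_mul {r c x : ℝ} (hc : 0 ≤ c) (hcr : exp c ≤ r)
    (hx : IsFixedPt (fun y ↦ r * exp (-(c * y))) x) : 1 ≤ x := by
  have hr : 0 ≤ r := (exp_nonneg c).trans hcr
  refine le_of_isFixedPt_of_antitone (antitone_mul_exp_neg_mul hr hc) ?_ hx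
  calc
    1 = exp c * exp (-(c * 1)) := by rw [mul_one, ← exp_add, add_neg_cancel, exp_zero]
    _ ≤ r * exp (-(c * 1)) := by gcongr

theorem isFixedPt_mul_of_mul_eq_mul_exp {L U α β : ℝ} (hL : L ≠ 0) (hα : α ≠ 0)
    (hfix : L * α * β = U * exp (β * (α - 1))) :
    IsFixedPt (fun y ↦ U / L * exp (-((α⁻¹ - 1) * y))) (α * β) := by
  have hexponent : -((α⁻¹ - 1) * (α * β)) = β * (α - 1) := by
    field_simp
    ring
  calc
    U / L * exp (-((α⁻¹ - 1) * (α * β))) = U * exp (β * (α - 1)) / L := by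
      rw [hexponent, div_mul_eq_mul_div]
    _ = α * β := by rw [← hfix, mul_assoc, mul_div_cancel_left₀ _ hL]

theorem exp_inv_sub_one_le_of_one_div_log_add_one_le {r α : ℝ} (hr : 0 < r)
    (hlog : 0 < log r + 1) (hα : 1 / (log r + 1) ≤ α) : exp (α⁻¹ - 1) ≤ r := by
  rw [← le_log_iff_exp_le hr, sub_le_iff_le_add]
  exact inv_le_of_inv_le₀ hlog (by rwa [← one_div])

/-- For `α ∈ [1/(ln(U/L)+1), 1)` and `β > 0` the solution of
`L·α·β = U·exp(β·(α−1))`, we have `α·β ≥ 1`, i.e. `β ≥ 1/α`. -/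
theorem ect_alpha_beta_ge_one (L U α β : ℝ) (hL : 0 < L) (hLU : L < U)
    (hα : α ∈ Set.Ico (1 / (Real.log (U / L) + 1)) (1 : ℝ))
    (hβ : 0 < β) (hfix : L * α * β = U * Real.exp (β * (α - 1))) :
    1 ≤ α * β ∧ 1 / α ≤ β := by
  obtain ⟨hα_ge, hα_lt_one⟩ := hα
  have hratio : 1 < U / L := (one_lt_div hL).2 hLU
  have hlog : 0 < log (U / L) + 1 := add_pos (log_pos hratio) one_pos
  have hα_pos : 0 < α := (one_div_pos.2 hlog).trans_le hα_ge
  have hrate : 0 ≤ α⁻¹ - 1 := sub_nonneg.2 ((one_le_inv₀ hα_pos).2 hα_lt_one.le)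
  have hαβ : 1 ≤ α * β :=
    one_le_of_isFixedPt_mul_exp_neg_mul hrate
      (exp_inv_sub_one_le_of_one_div_log_add_one_le (one_pos.trans hratio) hlog hα_ge)
      (isFixedPt_mul_of_mul_eq_mul_exp hL.ne' hα_pos.ne' hfix)
  exact ⟨hαβ, (div_le_iff₀' hα_pos).2 hαβ⟩
end

section
/- (Grönwall-type lemma.) Let 0 < r ≤ M be reals, β > 0, C ∈ ℝ, and let g : ℝ → ℝ be differentiable with continuous derivative on [r, M]. Suppose that for every x ∈ [r, M], C + ∫_r^x u·g'(u) du ≥ x/β. Then for every x ∈ [r, M], g(x) ≥ 1/β − (C − r·g(r))/r + (1/β)·ln(x/r). In particular, if C = r/β then g(x) ≥ g(r) + (1/β)·ln(x/r) for all x ∈ [r, M]. -/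
/-!
Integration by parts turns the hypothesis into `k + P x / x ≤ g x`, where `k = 1 / β` and
`P x = (r * g r - C) + ∫ u in r..x, g u` is a primitive of `g`. This is Grönwall's situation:
`(P x / x)' = (g x - P x / x) / x ≥ k / x`, so `P x / x - k * log x` is nondecreasing. Comparing
its values at `r` and `x` bounds `P x / x`, and hence `g x`, from below.
-/

open Set MeasureTheory

theorem hasDerivWithinAt_integral_of_continuousOn {E : Type*} [NormedAddCommGroup E]
    [NormedSpace ℝ E] [CompleteSpace E] {f : ℝ → E} {a b x : ℝ}
    (hf : ContinuousOn f (Icc a b)) (hx : x ∈ Icc a b) :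
    HasDerivWithinAt (fun y ↦ ∫ u in a..y, f u) (f x) (Icc a b) x := by
  have : Fact (x ∈ Icc a b) := ⟨hx⟩
  have hint : IntervalIntegrable f volume a x :=
    (hf.mono (Icc_subset_Icc_right hx.2)).intervalIntegrable_of_Icc hx.1
  exact intervalIntegral.integral_hasDerivWithinAt_right hint
    (hf.stronglyMeasurableAtFilter_nhdsWithin measurableSet_Icc x) (hf x hx)

theorem integral_id_mul_deriv_eq_sub {g g' : ℝ → ℝ} {a b : ℝ} (hg : ContinuousOn g (uIcc a b))
    (hderiv : ∀ x ∈ Ioo (min a b) (max a b), HasDerivAt g (g' x) x)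
    (hint : IntervalIntegrable g' volume a b) :
    ∫ u in a..b, u * g' u = b * g b - a * g a - ∫ u in a..b, g u := by
  simpa only [id_eq, one_mul] using
    intervalIntegral.integral_mul_deriv_eq_deriv_mul_of_hasDerivAt continuousOn_id hg
      (fun x _ ↦ hasDerivAt_id x) hderiv intervalIntegrable_const hint

section Gronwall

variable {r M k : ℝ}

theorem monotoneOn_div_sub_mul_log {P p : ℝ → ℝ} (hr : 0 < r)
    (hderiv : ∀ x ∈ Icc r M, HasDerivWithinAt P (p x) (Icc r M) x)
    (hp : ∀ x ∈ Icc r M, k + P x / x ≤ p x) :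
    MonotoneOn (fun x ↦ P x / x - k * Real.log x) (Icc r M) := by
  have hquot : ∀ x ∈ Icc r M, HasDerivWithinAt (fun x ↦ P x / x - k * Real.log x)
      ((p x * x - P x * 1) / x ^ 2 - k * x⁻¹) (Icc r M) x := fun x hx ↦
    have hx₀ : x ≠ 0 := (hr.trans_le hx.1).ne'
    ((hderiv x hx).div (hasDerivWithinAt_id x _) hx₀).sub
      ((Real.hasDerivAt_log hx₀).hasDerivWithinAt.const_mul k)
  refine monotoneOn_of_hasDerivWithinAt_nonneg (convex_Icc r M)
    (fun x hx ↦ (hquot x hx).continuousWithinAt)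
    (fun x hx ↦ (hquot x (interior_subset hx)).mono interior_subset) fun x hx ↦ ?_
  have hx' : x ∈ Icc r M := interior_subset hx
  have hx₀ : 0 < x := hr.trans_le hx'.1
  calc 0 ≤ (p x - (k + P x / x)) / x := div_nonneg (sub_nonneg.2 (hp x hx')) hx₀.le
    _ = (p x * x - P x * 1) / x ^ 2 - k * x⁻¹ := by field_simp; ring

theorem add_mul_log_le_of_add_integral_div_le {f : ℝ → ℝ} {A : ℝ} (hr : 0 < r)
    (hf : ContinuousOn f (Icc r M))
    (hle : ∀ x ∈ Icc r M, k + (A + ∫ u in r..x, f u) / x ≤ f x) {x : ℝ} (hx : x ∈ Icc r M) :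
    k + A / r + k * Real.log (x / r) ≤ f x := by
  have hmono : MonotoneOn (fun x ↦ (A + ∫ u in r..x, f u) / x - k * Real.log x) (Icc r M) :=
    monotoneOn_div_sub_mul_log hr
      (fun y hy ↦ (hasDerivWithinAt_integral_of_continuousOn hf hy).const_add A) hle
  have hcompare : A / r - k * Real.log r ≤ (A + ∫ u in r..x, f u) / x - k * Real.log x := by
    simpa only [intervalIntegral.integral_same, add_zero] using
      hmono (left_mem_Icc.2 (hx.1.trans hx.2)) hx hx.1
  rw [Real.log_div (hr.trans_le hx.1).ne' hr.ne', mul_sub]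
  linarith [hle x hx]

theorem gronwall_lower_bound_general {g g' : ℝ → ℝ} {C : ℝ} (hr : 0 < r)
    (hg : ContinuousOn g (Icc r M)) (hderiv : ∀ x ∈ Ioo r M, HasDerivAt g (g' x) x)
    (hint : IntervalIntegrable g' volume r M)
    (hcomp : ∀ x ∈ Icc r M, k * x ≤ C + ∫ u in r..x, u * g' u) :
    (∀ x ∈ Icc r M, k - (C - r * g r) / r + k * Real.log (x / r) ≤ g x) ∧
      (C = k * r → ∀ x ∈ Icc r M, g r + k * Real.log (x / r) ≤ g x) := by
  have hparts : ∀ x ∈ Icc r M,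
      ∫ u in r..x, u * g' u = x * g x - r * g r - ∫ u in r..x, g u := fun x hx ↦ by
    refine integral_id_mul_deriv_eq_sub ?_ ?_ (hint.mono_set ?_)
    · rw [uIcc_of_le hx.1]
      exact hg.mono (Icc_subset_Icc_right hx.2)
    · rw [min_eq_left hx.1, max_eq_right hx.1]
      exact fun y hy ↦ hderiv y (Ioo_subset_Ioo_right hx.2 hy)
    · exact uIcc_subset_uIcc_left (Icc_subset_uIcc hx)
  have hintegral : ∀ x ∈ Icc r M, k + ((r * g r - C) + ∫ u in r..x, g u) / x ≤ g x :=
    fun x hx ↦ by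
      have hx₀ : 0 < x := hr.trans_le hx.1
      rw [← le_sub_iff_add_le', div_le_iff₀ hx₀]
      linarith [hcomp x hx, hparts x hx]
  have hbound : ∀ x ∈ Icc r M, k - (C - r * g r) / r + k * Real.log (x / r) ≤ g x :=
    fun x hx ↦ by
      simpa only [← neg_sub C, neg_div, ← sub_eq_add_neg] using
        add_mul_log_le_of_add_integral_div_le hr hg hintegral hx
  refine ⟨hbound, fun hC x hx ↦ ?_⟩
  have hinit : k - (C - r * g r) / r = g r := by
    rw [hC]
    field_simp
    ring
  simpa only [hinit] using hbound x hx

end Gronwall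

/-- Grönwall-type lemma: if `g` has continuous derivative `g'` on `[r, M]` and
`C + ∫_r^x u·g'(u) du ≥ x/β` for all `x ∈ [r, M]`, then
`g(x) ≥ 1/β − (C − r·g(r))/r + (1/β)·ln(x/r)` on `[r, M]`; in particular if
`C = r/β` then `g(x) ≥ g(r) + (1/β)·ln(x/r)`. -/
theorem gronwall_lower_bound (r M β C : ℝ) (hr : 0 < r) (hrM : r ≤ M)
    (hβ : 0 < β) (g g' : ℝ → ℝ)
    (hderiv : ∀ x ∈ Set.Icc r M, HasDerivAt g (g' x) x)
    (hcont : ContinuousOn g' (Set.Icc r M))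
    (hcomp : ∀ x ∈ Set.Icc r M, x / β ≤ C + ∫ u in r..x, u * g' u) :
    (∀ x ∈ Set.Icc r M,
        1 / β - (C - r * g r) / r + (1 / β) * Real.log (x / r) ≤ g x) ∧
      (C = r / β → ∀ x ∈ Set.Icc r M,
        g r + (1 / β) * Real.log (x / r) ≤ g x) := by
  simpa only [one_div_mul_eq_div] using gronwall_lower_bound_general (k := 1 / β) hr
    (HasDerivAt.continuousOn hderiv) (fun x hx ↦ hderiv x (Ioo_subset_Icc_self hx))
    (hcont.intervalIntegrable_of_Icc hrM) (by simpa only [one_div_mul_eq_div] using hcomp)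
end

section
/- Let 0 < L < U be reals, α ∈ (0,1), and let β be the unique positive solution of L·α·β = U·exp(β·(α−1)). Then for every β' > 0: α + (1/β')·ln( U/(α·β'·L) ) ≤ 1 if and only if β' ≥ β. (This is the analytic core of the Pareto-optimality lower bound: any α-CTIF deterministic online knapsack algorithm with competitive ratio β' must satisfy 1 = g(U) ≥ α + (1/β')·ln(U/(αβ'L)), hence β' ≥ β = W(U(1−α)/(Lα))/(1−α), where W is the Lambert W function.) -/
/-! Multiplying by `x` and exponentiating turns the constraint `α + (1/x)·ln(q/x) ≤ 1`, with
`q = U/(L·α)`, into `q ≤ x·exp((1-α)·x)`. The right-hand side is strictly increasing in `x ≥ 0`,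
and the equation defining `β` says that it takes the value `q` at `β`. -/

open Real Set

theorem strictMonoOn_mul_exp_mul {c : ℝ} (hc : 0 ≤ c) :
    StrictMonoOn (fun x : ℝ ↦ x * exp (c * x)) (Ici 0) := by
  intro x hx y _ hxy
  have hexp : exp (c * x) ≤ exp (c * y) := by gcongr
  exact mul_lt_mul hxy hexp (exp_pos _) (hx.trans hxy.le)

theorem add_one_div_mul_log_div_le_one_iff {q x : ℝ} (a : ℝ) (hq : 0 < q) (hx : 0 < x) :
    a + 1 / x * log (q / x) ≤ 1 ↔ q ≤ x * exp ((1 - a) * x) :=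
  calc a + 1 / x * log (q / x) ≤ 1
      ↔ log (q / x) ≤ (1 - a) * x := by
        rw [one_div_mul_eq_div, ← le_sub_iff_add_le', div_le_iff₀ hx]
    _ ↔ q / x ≤ exp ((1 - a) * x) := log_le_iff_le_exp (div_pos hq hx)
    _ ↔ q ≤ x * exp ((1 - a) * x) := div_le_iff₀' hx

theorem div_eq_mul_exp_of_mul_eq_mul_exp {k U α β : ℝ} (hk : k ≠ 0)
    (hfix : k * β = U * exp (β * (α - 1))) : U / k = β * exp ((1 - α) * β) := by
  have hexp : exp (β * (α - 1)) * exp ((1 - α) * β) = 1 := by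
    rw [← exp_add, exp_eq_one_iff]
    ring
  rw [div_eq_iff hk]
  linear_combination (-U) * hexp - exp ((1 - α) * β) * hfix

theorem pareto_lower_bound_core_general {L U α β x : ℝ} (hL : L ≠ 0) (hα₀ : α ≠ 0) (hα₁ : α ≤ 1)
    (hβ : 0 < β) (hfix : L * α * β = U * exp (β * (α - 1))) (hx : 0 < x) :
    α + (1 / x) * log (U / (α * x * L)) ≤ 1 ↔ β ≤ x := by
  have hq : U / (L * α) = β * exp ((1 - α) * β) :=
    div_eq_mul_exp_of_mul_eq_mul_exp (mul_ne_zero hL hα₀) hfix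
  have hq_pos : 0 < U / (L * α) := hq ▸ mul_pos hβ (exp_pos _)
  have hdiv : U / (α * x * L) = U / (L * α) / x := by rw [div_div]; ring_nf
  rw [hdiv, add_one_div_mul_log_div_le_one_iff α hq_pos hx, hq]
  exact (strictMonoOn_mul_exp_mul (sub_nonneg.2 hα₁)).le_iff_le hβ.le hx.le

/-- Analytic core of the Pareto-optimality lower bound: with `β` the unique
positive solution of `L·α·β = U·exp(β·(α−1))`, a candidate competitive ratio
`β' > 0` satisfies the feasibility constraint
`α + (1/β')·ln(U/(α·β'·L)) ≤ 1` if and only if `β' ≥ β`. -/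
theorem pareto_lower_bound_core (L U α β : ℝ) (hL : 0 < L) (hLU : L < U)
    (hα : α ∈ Set.Ioo (0 : ℝ) 1) (hβ : 0 < β)
    (hfix : L * α * β = U * Real.exp (β * (α - 1))) :
    ∀ β' : ℝ, 0 < β' →
      (α + (1 / β') * Real.log (U / (α * β' * L)) ≤ 1 ↔ β ≤ β') :=
  fun _ ↦ pareto_lower_bound_core_general hL.ne' hα.1.ne' hα.2.le hβ hfix
end

section
/- Let 0 < L < U be reals and γ ∈ [0,1). For every z_T ∈ [(1−γ)/(ln(U/L)+1), 1−γ], ∫₀^{z_T} max( L, (L/e)·((Ue)/L)^{z/(1−γ)} ) dz = (1−γ)·(L/e)·((Ue)/L)^{z_T/(1−γ)} / (ln(U/L)+1); consequently (L/e)·((Ue)/L)^{z_T/(1−γ)} = ((ln(U/L)+1)/(1−γ)) · ∫₀^{z_T} max( L, (L/e)·((Ue)/L)^{z/(1−γ)} ) dz. (This is the integral identity for Case I of the proof that LA-ECT is (1/(1−γ))·(ln(U/L)+1)-robust, when the algorithm terminates before reaching the flat prediction region of its threshold.) -/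
/-!
In the variable `t = ρ z`, where `ρ = (ln (U / L) + 1) / (1 - γ)`, the threshold is
`L * exp (t - 1)`, which meets the floor `L` exactly at `t = 1`. The floor contributes `L` over
`[0, 1]`, and this is also the value of the antiderivative `L * exp (t - 1)` at `t = 1`. The two
boundary terms cancel, so the integral up to `t ≥ 1` is the threshold itself; going back to `z`
divides it by `ρ`.
-/

open Real

theorem integral_max_one_exp_sub_one {T : ℝ} (hT : 1 ≤ T) :
    ∫ t in (0 : ℝ)..T, max 1 (exp (t - 1)) = exp (T - 1) := by
  have hcont : Continuous fun t : ℝ => max 1 (exp (t - 1)) := by fun_prop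
  have floor_part : ∫ t in (0 : ℝ)..1, max 1 (exp (t - 1)) = 1 := by
    rw [intervalIntegral.integral_congr (g := fun _ => 1), integral_one, sub_zero]
    intro t ht
    rw [Set.uIcc_of_le zero_le_one] at ht
    exact max_eq_left (exp_le_one_iff.2 (sub_nonpos.2 ht.2))
  have exp_part : ∫ t in 1..T, max 1 (exp (t - 1)) = exp (T - 1) - 1 := by
    rw [intervalIntegral.integral_congr (g := fun t => exp (t - 1)),
      intervalIntegral.integral_comp_sub_right exp, integral_exp, sub_self, exp_zero]
    intro t ht
    rw [Set.uIcc_of_le hT] at ht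
    exact max_eq_right (one_le_exp (sub_nonneg.2 ht.1))
  rw [← intervalIntegral.integral_add_adjacent_intervals (hcont.intervalIntegrable 0 1)
    (hcont.intervalIntegrable 1 T), floor_part, exp_part, add_sub_cancel]

theorem integral_max_const_mul_exp_sub_one {L a z : ℝ} (hL : 0 ≤ L) (haz : 1 ≤ a * z) :
    ∫ x in (0 : ℝ)..z, max L (L * exp (a * x - 1)) = L * exp (a * z - 1) / a := by
  have ha : a ≠ 0 := left_ne_zero_of_mul (zero_lt_one.trans_le haz).ne'
  calc ∫ x in (0 : ℝ)..z, max L (L * exp (a * x - 1))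
      = ∫ x in (0 : ℝ)..z, L * max 1 (exp (a * x - 1)) := by
        simp only [mul_max_of_nonneg _ _ hL, mul_one]
    _ = L * (a⁻¹ * ∫ t in (0 : ℝ)..a * z, max 1 (exp (t - 1))) := by
        rw [intervalIntegral.integral_const_mul,
          intervalIntegral.integral_comp_mul_left (fun t => max 1 (exp (t - 1))) ha,
          mul_zero, smul_eq_mul]
    _ = L * exp (a * z - 1) / a := by
        rw [integral_max_one_exp_sub_one haz]
        ring

/-- The threshold of LA-ECT on its initial utilization segment: the least value density accepted
at utilization `z`. It is a function on all of `ℝ`, without the cut-off at `z = 1 - γ`. -/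
noncomputable def laectThreshold (L U γ z : ℝ) : ℝ :=
  L / exp 1 * (U * exp 1 / L) ^ (z / (1 - γ))

/-- The robustness ratio of LA-ECT, which is also the exponential growth rate of
`laectThreshold`. -/
noncomputable def laectRatio (L U γ : ℝ) : ℝ :=
  (log (U / L) + 1) / (1 - γ)

section

variable {L U γ zT : ℝ}

theorem laectThreshold_eq_mul_exp (hL : 0 < L) (hU : 0 < U) (z : ℝ) :
    laectThreshold L U γ z = L * exp (laectRatio L U γ * z - 1) := by
  have log_base : log (U * exp 1 / L) = log (U / L) + 1 := by
    rw [mul_div_right_comm, log_mul (by positivity) (by positivity), log_exp]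
  have exponent : (log (U / L) + 1) * (z / (1 - γ)) = laectRatio L U γ * z := by
    rw [laectRatio]
    ring
  rw [laectThreshold, rpow_def_of_pos (by positivity), log_base, exponent, exp_sub]
  ring

theorem one_le_laectRatio_mul (hL : 0 < L) (hLU : L ≤ U) (hγ : γ < 1)
    (hzT : (1 - γ) / (log (U / L) + 1) ≤ zT) : 1 ≤ laectRatio L U γ * zT := by
  have hlog : 0 ≤ log (U / L) := log_nonneg ((one_le_div hL).2 hLU)
  have hratio : 0 < laectRatio L U γ := div_pos (by positivity) (sub_pos.2 hγ)
  rwa [← inv_le_iff_one_le_mul₀' hratio, laectRatio, inv_div]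

theorem integral_max_laectThreshold (hL : 0 < L) (hU : 0 < U)
    (hzT : 1 ≤ laectRatio L U γ * zT) :
    ∫ z in (0 : ℝ)..zT, max L (laectThreshold L U γ z) =
      laectThreshold L U γ zT / laectRatio L U γ := by
  simp only [laectThreshold_eq_mul_exp hL hU]
  exact integral_max_const_mul_exp_sub_one hL.le hzT

theorem laect_robust_case1_general (hL : 0 < L) (hU : 0 < U)
    (hzT : 1 ≤ laectRatio L U γ * zT) :
    (∫ z in (0 : ℝ)..zT, max L (laectThreshold L U γ z)) =
        (1 - γ) * (L / exp 1) * (U * exp 1 / L) ^ (zT / (1 - γ)) / (log (U / L) + 1) ∧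
      laectThreshold L U γ zT =
        laectRatio L U γ * ∫ z in (0 : ℝ)..zT, max L (laectThreshold L U γ z) := by
  have hratio : laectRatio L U γ ≠ 0 := left_ne_zero_of_mul (zero_lt_one.trans_le hzT).ne'
  rw [integral_max_laectThreshold hL hU hzT]
  refine ⟨?_, (mul_div_cancel₀ _ hratio).symm⟩
  rw [laectThreshold, laectRatio, div_div_eq_mul_div]
  ring

end

/-- Case I of the LA-ECT robustness proof: for every
`z_T ∈ [(1−γ)/(ln(U/L)+1), 1−γ]`,
`∫₀^{z_T} max(L, (L/e)·((Ue)/L)^{z/(1−γ)}) dz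
  = (1−γ)·(L/e)·((Ue)/L)^{z_T/(1−γ)}/(ln(U/L)+1)`; consequently the final
threshold value equals `((ln(U/L)+1)/(1−γ))` times the collected value. -/
theorem laect_robust_case1 (L U γ : ℝ) (hL : 0 < L) (hLU : L < U)
    (hγ : γ ∈ Set.Ico (0 : ℝ) 1) :
    ∀ zT ∈ Set.Icc ((1 - γ) / (Real.log (U / L) + 1)) (1 - γ),
      (∫ z in (0 : ℝ)..zT,
          max L ((L / Real.exp 1) * ((U * Real.exp 1) / L) ^ (z / (1 - γ)))) =
        (1 - γ) * (L / Real.exp 1) * ((U * Real.exp 1) / L) ^ (zT / (1 - γ)) /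
          (Real.log (U / L) + 1) ∧
      (L / Real.exp 1) * ((U * Real.exp 1) / L) ^ (zT / (1 - γ)) =
        ((Real.log (U / L) + 1) / (1 - γ)) *
          ∫ z in (0 : ℝ)..zT,
            max L ((L / Real.exp 1) * ((U * Real.exp 1) / L) ^ (z / (1 - γ))) :=
  fun _ hzT => laect_robust_case1_general hL (hL.trans hLU)
    (one_le_laectRatio_mul hL hLU.le hγ.2 hzT.1)
end

section
/- Let 0 < L < U be reals, γ ∈ [0,1), d̂ ∈ [L,U], κ = (1−γ)·ln(d̂·e/L)/(ln(U/L)+1), and let Ψ^{γ,d̂} be defined by Ψ^{γ,d̂}(z) = (L/e)·((Ue)/L)^{z/(1−γ)} for z ∈ [0,κ], Ψ^{γ,d̂}(z) = d̂ for z ∈ (κ, κ+γ), and Ψ^{γ,d̂}(z) = (L/e)·((Ue)/L)^{(z−γ)/(1−γ)} for z ∈ [κ+γ, 1]. Then for every z_T ∈ [κ+γ, 1], ∫₀^{z_T} max( L, Ψ^{γ,d̂}(z) ) dz = (1−γ)·(L/e)·((Ue)/L)^{(z_T−γ)/(1−γ)} / (ln(U/L)+1) + γ·d̂, and consequently Ψ^{γ,d̂}(z_T)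 ≤ ((ln(U/L)+1)/(1−γ)) · ∫₀^{z_T} max( L, Ψ^{γ,d̂}(z) ) dz. (This is Case III of the proof that LA-ECT is (1/(1−γ))·(ln(U/L)+1)-robust.) -/
/-!
`Ψ` is an exponential threshold into which a plateau of width `γ` and height `d` has been inserted
at `κ`. Inserting a plateau adds `γ * d` to the integral and shifts the rest of the curve by `γ`,
and it commutes with taking the maximum with `L`, so only the uninterrupted exponential has to be
integrated. With base `B = U * e / L`, rescaling by `1 - γ` and by `L / e` reduces this to
`∫₀ˣ max e (B ^ z) dz = B ^ x / log B`: the curve `B ^ z` reaches height `e` exactly at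
`z = 1 / log B`, where the constant part has contributed `e / log B = B ^ z / log B`, which is the
value of the antiderivative of `B ^ z` at that point.
-/

open MeasureTheory Real

section Plateau

variable {E β : Type*}

/-- The function `f` cut open at `κ`, with a plateau of width `γ` and height `d` inserted there.
The LA-ECT threshold is an exponential opened up in this way. For `0 ≤ γ` both end points of the
plateau carry the value `f κ`, which need not equal `d`. -/
noncomputable def insertPlateau (f : ℝ → E) (κ γ : ℝ) (d : E) (z : ℝ) : E :=
  if z ≤ κ then f z else if z < κ + γ then d else f (z - γ)

variable {f : ℝ → E} {κ γ z : ℝ} {d : E}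

theorem insertPlateau_of_le (hz : z ≤ κ) : insertPlateau f κ γ d z = f z :=
  if_pos hz

theorem insertPlateau_of_mem_Ioo (hz : z ∈ Set.Ioo κ (κ + γ)) : insertPlateau f κ γ d z = d := by
  rw [insertPlateau, if_neg hz.1.not_ge, if_pos hz.2]

theorem insertPlateau_of_add_le (hγ : 0 ≤ γ) (hz : κ + γ ≤ z) :
    insertPlateau f κ γ d z = f (z - γ) := by
  rcases hγ.eq_or_lt with rfl | hγ_pos
  · simp only [insertPlateau, add_zero, sub_zero] at hz ⊢
    rw [if_neg hz.not_gt, ite_self]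
  · rw [insertPlateau, if_neg (by linarith), if_neg hz.not_gt]

theorem apply_insertPlateau (g : E → β) :
    g (insertPlateau f κ γ d z) = insertPlateau (fun x ↦ g (f x)) κ γ (g d) z := by
  simp only [insertPlateau, apply_ite g]

theorem integral_insertPlateau [NormedAddCommGroup E] [NormedSpace ℝ E] [CompleteSpace E]
    {a b : ℝ} (hγ : 0 ≤ γ) (ha : a ≤ κ) (hb : κ + γ ≤ b)
    (hfl : IntervalIntegrable f volume a κ)
    (hfr : IntervalIntegrable f volume κ (b - γ)) :
    ∫ z in a..b, insertPlateau f κ γ d z = (∫ z in a..(b - γ), f z) + γ • d := by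
  have hκγ : κ ≤ κ + γ := le_add_of_nonneg_right hγ
  have eq_left : Set.EqOn f (insertPlateau f κ γ d) (Set.uIoo a κ) := fun z hz ↦
    (insertPlateau_of_le (Set.uIoo_of_le ha ▸ hz).2.le).symm
  have eq_mid : Set.EqOn (fun _ ↦ d) (insertPlateau f κ γ d) (Set.uIoo κ (κ + γ)) := fun z hz ↦
    (insertPlateau_of_mem_Ioo (Set.uIoo_of_le hκγ ▸ hz)).symm
  have eq_right : Set.EqOn (fun z ↦ f (z - γ)) (insertPlateau f κ γ d) (Set.uIoo (κ + γ) b) :=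
    fun z hz ↦ (insertPlateau_of_add_le hγ (Set.uIoo_of_le hb ▸ hz).1.le).symm
  have hfr_shift : IntervalIntegrable (fun z ↦ f (z - γ)) volume (κ + γ) b := by
    simpa only [sub_add_cancel] using hfr.comp_sub_right γ
  have int_left := hfl.congr_uIoo eq_left
  have int_mid : IntervalIntegrable (insertPlateau f κ γ d) volume κ (κ + γ) :=
    intervalIntegrable_const.congr_uIoo eq_mid
  rw [← intervalIntegral.integral_add_adjacent_intervals (int_left.trans int_mid)
      (hfr_shift.congr_uIoo eq_right),
    ← intervalIntegral.integral_add_adjacent_intervals int_left int_mid,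
    ← intervalIntegral.integral_congr_uIoo eq_left,
    ← intervalIntegral.integral_congr_uIoo eq_mid,
    ← intervalIntegral.integral_congr_uIoo eq_right,
    intervalIntegral.integral_const, intervalIntegral.integral_comp_sub_right,
    add_sub_cancel_left, add_sub_cancel_right,
    ← intervalIntegral.integral_add_adjacent_intervals hfl hfr]
  abel

end Plateau

section Exponential

variable {B : ℝ}

theorem integral_const_rpow (hB : 0 < B) (hB_one : B ≠ 1) (a b : ℝ) :
    ∫ z in a..b, B ^ z = (B ^ b - B ^ a) / log B := by
  have hlog : log B ≠ 0 := log_ne_zero_of_pos_of_ne_one hB hB_one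
  rw [intervalIntegral.integral_eq_sub_of_hasDerivAt (f := fun z ↦ B ^ z / log B), sub_div]
  · intro z _
    simpa only [mul_div_cancel_right₀ _ hlog] using
      (hasStrictDerivAt_const_rpow hB z).hasDerivAt.div_const (log B)
  · exact (continuous_const_rpow hB.ne').intervalIntegrable a b

theorem integral_max_exp_one_rpow (hB : 1 < B) {x : ℝ} (hx : (log B)⁻¹ ≤ x) :
    ∫ z in 0..x, max (exp 1) (B ^ z) = B ^ x / log B := by
  have hB_pos : 0 < B := one_pos.trans hB
  have hcross : B ^ (log B)⁻¹ = exp 1 := rpow_inv_log hB_pos hB.ne'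
  have hcont : Continuous fun z : ℝ ↦ max (exp 1) (B ^ z) :=
    continuous_const.max (continuous_const_rpow hB_pos.ne')
  have below : ∫ z in 0..(log B)⁻¹, max (exp 1) (B ^ z) = exp 1 / log B := by
    rw [intervalIntegral.integral_congr_Ioo_of_le (g := fun _ ↦ exp 1)
      (inv_nonneg.2 (log_pos hB).le) fun z hz ↦ max_eq_left ?_]
    · rw [intervalIntegral.integral_const, sub_zero, smul_eq_mul, inv_mul_eq_div]
    · exact hcross ▸ rpow_le_rpow_of_exponent_le hB.le hz.2.le
  have above : ∫ z in (log B)⁻¹..x, max (exp 1) (B ^ z) = (B ^ x - exp 1) / log B := by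
    rw [intervalIntegral.integral_congr_Ioo_of_le (g := fun z ↦ B ^ z) hx
      fun z hz ↦ max_eq_right ?_]
    · rw [integral_const_rpow hB_pos hB.ne', hcross]
    · exact hcross ▸ rpow_le_rpow_of_exponent_le hB.le hz.1.le
  rw [← intervalIntegral.integral_add_adjacent_intervals (hcont.intervalIntegrable _ _)
    (hcont.intervalIntegrable _ _), below, above]
  ring

theorem integral_max_const_rpow_div {L c x : ℝ} (hL : 0 ≤ L) (hB : 1 < B) (hc : 0 < c)
    (hx : c / log B ≤ x) :
    ∫ z in 0..x, max L (L / exp 1 * B ^ (z / c)) = c * (L / exp 1) * B ^ (x / c) / log B := by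
  have hscale (y : ℝ) : max L (L / exp 1 * y) = L / exp 1 * max (exp 1) y := by
    rw [mul_max_of_nonneg _ _ (by positivity), div_mul_cancel₀ _ (exp_ne_zero 1)]
  have hx_div : (log B)⁻¹ ≤ x / c := by
    rwa [le_div_iff₀ hc, inv_mul_eq_div]
  simp only [hscale]
  rw [intervalIntegral.integral_const_mul,
    intervalIntegral.integral_comp_div (fun z ↦ max (exp 1) (B ^ z)) hc.ne', zero_div,
    integral_max_exp_one_rpow hB hx_div, smul_eq_mul]
  ring

end Exponential

section Threshold

variable {L B γ d κ zT : ℝ}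

theorem integral_max_insertPlateau_rpow (hL : 0 ≤ L) (hB : 1 < B) (hγ : γ ∈ Set.Ico (0 : ℝ) 1)
    (hLd : L ≤ d) (hκ : (1 - γ) / log B ≤ κ) (hzT : κ + γ ≤ zT) :
    ∫ z in 0..zT, max L (insertPlateau (fun x ↦ L / exp 1 * B ^ (x / (1 - γ))) κ γ d z) =
      (1 - γ) * (L / exp 1) * B ^ ((zT - γ) / (1 - γ)) / log B + γ * d := by
  have hγ' : 0 < 1 - γ := sub_pos.2 hγ.2
  have hκ_nonneg : 0 ≤ κ := (div_nonneg hγ'.le (log_pos hB).le).trans hκ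
  have hcont : Continuous fun x : ℝ ↦ max L (L / exp 1 * B ^ (x / (1 - γ))) :=
    continuous_const.max (continuous_const.mul
      ((continuous_const_rpow (one_pos.trans hB).ne').comp (continuous_id.div_const _)))
  simp only [apply_insertPlateau (max L), max_eq_right hLd]
  rw [integral_insertPlateau hγ.1 hκ_nonneg hzT (hcont.intervalIntegrable _ _)
      (hcont.intervalIntegrable _ _),
    integral_max_const_rpow_div hL hB hγ' (hκ.trans (le_sub_iff_add_le.2 hzT)), smul_eq_mul]

theorem laect_robust_case3_general (hL : 0 ≤ L) (hB : 1 < B) (hγ : γ ∈ Set.Ico (0 : ℝ) 1)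
    (hLd : L ≤ d) (hκ : (1 - γ) / log B ≤ κ) (hzT : κ + γ ≤ zT) {Ψ : ℝ → ℝ}
    (hΨ : Ψ = insertPlateau (fun x ↦ L / exp 1 * B ^ (x / (1 - γ))) κ γ d) :
    (∫ z in 0..zT, max L (Ψ z)) =
        (1 - γ) * (L / exp 1) * B ^ ((zT - γ) / (1 - γ)) / log B + γ * d ∧
      Ψ zT ≤ log B / (1 - γ) * ∫ z in 0..zT, max L (Ψ z) := by
  subst hΨ
  have hγ' : 0 < 1 - γ := sub_pos.2 hγ.2
  have hlog : 0 < log B := log_pos hB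
  have hplateau : 0 ≤ log B / (1 - γ) * (γ * d) :=
    mul_nonneg (by positivity) (mul_nonneg hγ.1 (hL.trans hLd))
  have hintegral := integral_max_insertPlateau_rpow hL hB hγ hLd hκ hzT
  refine ⟨hintegral, ?_⟩
  rw [hintegral, insertPlateau_of_add_le hγ.1 hzT]
  calc L / exp 1 * B ^ ((zT - γ) / (1 - γ))
      ≤ L / exp 1 * B ^ ((zT - γ) / (1 - γ)) + log B / (1 - γ) * (γ * d) :=
        le_add_of_nonneg_right hplateau
    _ = log B / (1 - γ) *
          ((1 - γ) * (L / exp 1) * B ^ ((zT - γ) / (1 - γ)) / log B + γ * d) := by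
        field_simp

end Threshold

theorem log_mul_exp_one_div_s15 {x y : ℝ} (hx : x ≠ 0) (hy : y ≠ 0) :
    log (x * exp 1 / y) = log (x / y) + 1 := by
  rw [mul_div_right_comm, log_mul (div_ne_zero hx hy) (exp_ne_zero 1), log_exp]

theorem one_lt_mul_exp_one_div {x y : ℝ} (hy : 0 < y) (hyx : y ≤ x) : 1 < x * exp 1 / y :=
  (one_lt_div hy).2 <|
    hyx.trans_lt (lt_mul_of_one_lt_right (hy.trans_le hyx) (one_lt_exp_iff.2 one_pos))

theorem one_le_log_mul_exp_one_div {x y : ℝ} (hy : 0 < y) (hyx : y ≤ x) :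
    1 ≤ log (x * exp 1 / y) := by
  rw [log_mul_exp_one_div_s15 (hy.trans_le hyx).ne' hy.ne']
  exact le_add_of_nonneg_left (log_nonneg ((one_le_div hy).2 hyx))

/-- Case III of the LA-ECT robustness proof: for every `z_T ∈ [κ+γ, 1]`,
`∫₀^{z_T} max(L, Ψ^{γ,d̂}(z)) dz
  = (1−γ)·(L/e)·((Ue)/L)^{(z_T−γ)/(1−γ)}/(ln(U/L)+1) + γ·d̂`, and consequently
`Ψ^{γ,d̂}(z_T) ≤ ((ln(U/L)+1)/(1−γ)) · ∫₀^{z_T} max(L, Ψ^{γ,d̂}(z)) dz`. -/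
theorem laect_robust_case3 (L U γ d : ℝ) (hL : 0 < L) (hLU : L < U)
    (hγ : γ ∈ Set.Ico (0 : ℝ) 1) (hd : d ∈ Set.Icc L U)
    (κ : ℝ) (hκ : κ = (1 - γ) * Real.log (d * Real.exp 1 / L) / (Real.log (U / L) + 1))
    (Ψ : ℝ → ℝ)
    (hΨ : ∀ z, Ψ z =
      if z ≤ κ then (L / Real.exp 1) * ((U * Real.exp 1) / L) ^ (z / (1 - γ))
      else if z < κ + γ then d
      else (L / Real.exp 1) * ((U * Real.exp 1) / L) ^ ((z - γ) / (1 - γ))) :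
    ∀ zT ∈ Set.Icc (κ + γ) (1 : ℝ),
      (∫ z in (0 : ℝ)..zT, max L (Ψ z)) =
        (1 - γ) * (L / Real.exp 1) * ((U * Real.exp 1) / L) ^ ((zT - γ) / (1 - γ)) /
          (Real.log (U / L) + 1) + γ * d ∧
      Ψ zT ≤ ((Real.log (U / L) + 1) / (1 - γ)) *
        ∫ z in (0 : ℝ)..zT, max L (Ψ z) := by
  intro zT hzT
  have hB : 1 < U * exp 1 / L := one_lt_mul_exp_one_div hL hLU.le
  rw [← log_mul_exp_one_div_s15 (hL.trans hLU).ne' hL.ne'] at hκ ⊢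
  have hκ_ge : (1 - γ) / log (U * exp 1 / L) ≤ κ := hκ ▸ div_le_div_of_nonneg_right
    (le_mul_of_one_le_right (sub_nonneg.2 hγ.2.le) (one_le_log_mul_exp_one_div hL hd.1))
    (log_pos hB).le
  exact laect_robust_case3_general hL.le hB hγ hd.1 hκ_ge hzT.1 (funext hΨ)
end
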